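/- For every integer n ≥ 3, Σ_{k ∈ ℤ} 1/(4k+1)^n = π^n · vol(C_n) / 2^n, where the series over all integers k is absolutely convergent. In particular, 1 − 1/3³ + 1/5³ − 1/7³ + ⋯ = π³/32 and 1 + 1/3⁴ + 1/5⁴ + 1/7⁴ + ⋯ = π⁴/96. -/

import Mathlib

open MeasureTheory Real

/-- The graph polytope volume: `vol(G)` is the Lebesgue volume of
`{x ∈ [0,1]^V : x_i + x_j ≤ 1 for every edge ij of G}`. -/
noncomputable def gvol {V : Type*} [Fintype V] (G : SimpleGraph V) : ℝ :=
  (volume {x : V → ℝ | (∀ i, x i ∈ Set.Icc (0:ℝ) 1) ∧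
      ∀ ⦃i j⦄, G.Adj i j → x i + x j ≤ 1}).toReal

/-- The cycle `C_n` on vertex set `{1,…,n}` with edges `i(i+1)` (cyclically, mod n). -/
def cycG (n : ℕ) : SimpleGraph (Fin n) :=
  SimpleGraph.fromRel (fun i j => ((i : ℕ) + 1) % n = (j : ℕ))

/-!
The operator `T f (x) = ∫₀^{1-x} f` on `L²[0, 1]` has kernel `1_{x + y ≤ 1}`, so `vol(C_n)` is the
trace of `T ^ n`. The functions `cos (ω x)` with `ω = (4k + 1) π / 2`, `k ∈ ℤ`, are a complete
orthogonal system of eigenfunctions of `T`, with eigenvalues `1 / ω`, so this trace is also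
`∑ ω⁻ⁿ`. Concretely, the kernel `1 - max x y` of `T ^ 2` has an absolutely convergent expansion in
these eigenfunctions, by the Fourier series of the Bernoulli polynomial `B₂`, and applying `T` term
by term gives the kernels of all higher powers.
-/

section ChainVolume

variable {α : Type*}

/-- The word `a, x 0, …, x (n - 1), b` is a chain for the relation `R`. The measure of the set of
all such `x` is the kernel of the `(n + 1)`-st power of the operator with kernel `1_R`. -/
def IsChainBetween (R : α → α → Prop) {n : ℕ} (a b : α) (x : Fin n → α) : Prop :=
  ∀ i : Fin (n + 1), R ((Fin.cons a x : Fin (n + 1) → α) i) ((Fin.snoc x b : Fin (n + 1) → α) i)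

variable {R : α → α → Prop} {n : ℕ}

lemma isChainBetween_one {a b : α} {x : Fin 1 → α} :
    IsChainBetween R a b x ↔ R a (x 0) ∧ R (x 0) b := by
  simp [IsChainBetween, Fin.forall_fin_two, Fin.snoc]

lemma isChainBetween_cons {a b z : α} {t : Fin n → α} :
    IsChainBetween R a b (Fin.cons z t : Fin (n + 1) → α) ↔ R a z ∧ IsChainBetween R z b t := by
  simp only [IsChainBetween, Fin.forall_fin_succ (n := n + 1), ← Fin.cons_snoc_eq_snoc_cons,
    Fin.cons_zero, Fin.cons_succ]

lemma isChainBetween_self_iff_forall_cyclic {a : α} {t : Fin n → α} :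
    IsChainBetween R a a t ↔ ∀ i, R ((Fin.cons a t : Fin (n + 1) → α) i)
      ((Fin.cons a t : Fin (n + 1) → α) (i + 1)) := by
  simp only [IsChainBetween, Fin.snoc_eq_cons_rotate, finRotate_apply]

lemma measure_pi_fin_succ {α : Fin (n + 1) → Type*} [∀ i, MeasurableSpace (α i)]
    (μ : ∀ i, Measure (α i)) [∀ i, SigmaFinite (μ i)] {S : Set (∀ i, α i)} (hS : MeasurableSet S) :
    Measure.pi μ S =
      ∫⁻ z, Measure.pi (fun i : Fin n => μ i.succ) {t | Fin.cons z t ∈ S} ∂μ 0 := by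
  have hm := (measurePreserving_piFinSuccAbove μ 0).symm
  rw [← hm.measure_preimage hS.nullMeasurableSet, Measure.prod_apply (hm.measurable hS)]
  refine lintegral_congr fun z => congrArg (Measure.pi fun i : Fin n => μ i.succ) ?_
  ext t
  exact iff_of_eq (congrArg (· ∈ S) (Fin.insertNth_zero z t))

variable [MeasurableSpace α]

lemma measurableSet_isChainBetween (hR : MeasurableSet {p : α × α | R p.1 p.2}) (a b : α) :
    MeasurableSet {x : Fin n → α | IsChainBetween R a b x} := by
  simp only [IsChainBetween, Set.ofPred_forall]
  refine MeasurableSet.iInter fun i => ?_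
  have hcons : Measurable fun x : Fin n → α => (Fin.cons a x : Fin (n + 1) → α) i := by
    cases i using Fin.cases with
    | zero => exact measurable_const
    | succ j => exact measurable_pi_apply j
  have hsnoc : Measurable fun x : Fin n → α => (Fin.snoc x b : Fin (n + 1) → α) i := by
    cases i using Fin.lastCases with
    | last => simp only [Fin.snoc_last, measurable_const]
    | cast j => simp only [Fin.snoc_castSucc, measurable_pi_apply]
  exact (hcons.prodMk hsnoc) hR

lemma measurableSet_forall_cyclic (hR : MeasurableSet {p : α × α | R p.1 p.2}) :
    MeasurableSet {x : Fin (n + 1) → α | ∀ i, R (x i) (x (i + 1))} := by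
  rw [Set.ofPred_forall]
  refine MeasurableSet.iInter fun i => ?_
  have hpair : Measurable fun x : Fin (n + 1) → α => (x i, x (i + 1)) := by fun_prop
  exact hpair hR

lemma measure_pi_isChainBetween_one (μ : Measure α) (a b : α) :
    Measure.pi (fun _ => μ) {x : Fin 1 → α | IsChainBetween R a b x} =
      μ {z | R a z ∧ R z b} := by
  simp only [isChainBetween_one]
  exact (measurePreserving_funUnique μ (Fin 1)).measure_preimage_equiv {z | R a z ∧ R z b}

lemma measure_pi_isChainBetween_succ (μ : Measure α) [SigmaFinite μ]
    (hR : MeasurableSet {p : α × α | R p.1 p.2}) (a b : α) :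
    Measure.pi (fun _ => μ) {x : Fin (n + 1) → α | IsChainBetween R a b x} =
      ∫⁻ z in {z | R a z}, Measure.pi (fun _ => μ) {t : Fin n → α | IsChainBetween R z b t} ∂μ := by
  have ha : MeasurableSet {z | R a z} := measurable_prodMk_left hR
  rw [measure_pi_fin_succ _ (measurableSet_isChainBetween hR a b), ← lintegral_indicator ha]
  refine lintegral_congr fun z => ?_
  by_cases hz : R a z <;> simp [isChainBetween_cons, hz]

lemma measure_pi_forall_cyclic (μ : Measure α) [SigmaFinite μ]
    (hR : MeasurableSet {p : α × α | R p.1 p.2}) :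
    Measure.pi (fun _ => μ) {x : Fin (n + 1) → α | ∀ i, R (x i) (x (i + 1))} =
      ∫⁻ z, Measure.pi (fun _ => μ) {t : Fin n → α | IsChainBetween R z z t} ∂μ := by
  simp only [measure_pi_fin_succ _ (measurableSet_forall_cyclic hR), Set.mem_ofPred_eq,
    isChainBetween_self_iff_forall_cyclic]

end ChainVolume

section CyclePolytope

/-- The triangle with vertices `(0, 0)`, `(1, 0)` and `(0, 1)`: the relation imposed by an edge on
the coordinates of its endpoints in the graph polytope. -/
def InTriangle (x y : ℝ) : Prop := 0 ≤ x ∧ 0 ≤ y ∧ x + y ≤ 1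

lemma measurableSet_inTriangle : MeasurableSet {p : ℝ × ℝ | InTriangle p.1 p.2} := by
  unfold InTriangle
  measurability

lemma setOf_inTriangle {x : ℝ} (hx : 0 ≤ x) : {y | InTriangle x y} = Set.Icc 0 (1 - x) := by
  ext y
  simp [InTriangle, hx, le_sub_iff_add_le']

lemma IsChainBetween.left_mem_Icc {n : ℕ} {a b : ℝ} {x : Fin n → ℝ}
    (h : IsChainBetween InTriangle a b x) : a ∈ Set.Icc 0 1 := by
  obtain ⟨ha, hnext, hsum⟩ := h 0
  rw [Fin.cons_zero] at ha hsum
  exact ⟨ha, by linarith⟩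

lemma cycG_adj {n : ℕ} {i j : Fin (n + 2)} : (cycG (n + 2)).Adj i j ↔ i + 1 = j ∨ j + 1 = i := by
  have hsucc (i j : Fin (n + 2)) : ((i : ℕ) + 1) % (n + 2) = j ↔ i + 1 = j := by
    simp [Fin.ext_iff, Fin.val_add]
  rw [cycG, SimpleGraph.fromRel_adj, hsucc, hsucc, and_iff_right_iff_imp]
  rintro (rfl | rfl) <;> simp

lemma polytope_cycG_iff_forall_cyclic {n : ℕ} {x : Fin (n + 2) → ℝ} :
    ((∀ i, x i ∈ Set.Icc (0 : ℝ) 1) ∧ ∀ ⦃i j⦄, (cycG (n + 2)).Adj i j → x i + x j ≤ 1) ↔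
      ∀ i, InTriangle (x i) (x (i + 1)) := by
  simp only [cycG_adj]
  constructor
  · rintro ⟨hx, hadj⟩ i
    exact ⟨(hx i).1, (hx (i + 1)).1, hadj (.inl rfl)⟩
  · refine fun h => ⟨fun i => ⟨(h i).1, ?_⟩, ?_⟩
    · linarith [(h i).2.1, (h i).2.2]
    · rintro i j (rfl | rfl)
      · exact (h i).2.2
      · rw [add_comm]
        exact (h j).2.2

lemma gvol_cycG_eq_lintegral (n : ℕ) :
    gvol (cycG (n + 2)) =
      (∫⁻ z, volume {t : Fin (n + 1) → ℝ | IsChainBetween InTriangle z z t}).toReal := by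
  simp only [gvol, polytope_cycG_iff_forall_cyclic, volume_pi,
    measure_pi_forall_cyclic volume measurableSet_inTriangle]

end CyclePolytope

section OddSums

lemma hasSum_odd_of_hasSum_even {M : Type*} [AddCommGroup M] [UniformSpace M] [IsUniformAddGroup M]
    [CompleteSpace M] [T2Space M] {f : ℕ → M} {a b : M} (h : HasSum f a)
    (heven : HasSum (fun m => f (2 * m)) b) : HasSum (fun m => f (2 * m + 1)) (a - b) := by
  have hodd : Summable fun m => f (2 * m + 1) :=
    h.summable.comp_injective (i := fun m => 2 * m + 1) fun m m' hm => by simpa using hm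
  rw [← (heven.even_add_odd hodd.hasSum).unique h, add_sub_cancel_left]
  exact hodd.hasSum

lemma hasSum_int_four_mul_add_one_iff {M : Type*} [AddCommMonoid M] [TopologicalSpace M]
    {f : ℤ → M} (hf : f.Even) {a : M} :
    HasSum (fun k : ℤ => f (4 * k + 1)) a ↔ HasSum (fun m : ℕ => f (2 * m + 1)) a := by
  rw [← Equiv.intEquivNat.hasSum_iff]
  refine iff_of_eq (congrArg (HasSum · a) (funext fun k => ?_))
  cases k with
  | ofNat j =>
    have hj : Equiv.intEquivNat (Int.ofNat j) = 2 * j := rfl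
    simp only [Function.comp_apply, hj]
    congr 1
    grind
  | negSucc j =>
    have hj : Equiv.intEquivNat (Int.negSucc j) = 2 * j + 1 := rfl
    simp only [Function.comp_apply, hj, ← hf (4 * _ + 1)]
    congr 1
    grind

lemma hasSum_one_div_odd_pow_mul_cos {k : ℕ} (hk : k ≠ 0) {x : ℝ} (hx : x ∈ Set.Icc 0 (1 / 2)) :
    HasSum (fun m : ℕ => 1 / ((2 * m + 1 : ℕ) : ℝ) ^ (2 * k) * cos (2 * π * (2 * m + 1 : ℕ) * x))
      ((-1) ^ (k + 1) * (2 * π) ^ (2 * k) / 2 / (2 * k).factorial *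
        (bernoulliFun (2 * k) x - bernoulliFun (2 * k) (2 * x) / 2 ^ (2 * k))) := by
  have hall := hasSum_one_div_nat_pow_mul_cos hk (x := x) ⟨hx.1, by linarith [hx.2]⟩
  have hdouble := hasSum_one_div_nat_pow_mul_cos hk (x := 2 * x)
    ⟨by linarith [hx.1], by linarith [hx.2]⟩
  have heven : HasSum
      (fun m : ℕ => 1 / ((2 * m : ℕ) : ℝ) ^ (2 * k) * cos (2 * π * (2 * m : ℕ) * x))
      ((-1) ^ (k + 1) * (2 * π) ^ (2 * k) / 2 / (2 * k).factorial *
        bernoulliFun (2 * k) (2 * x) / 2 ^ (2 * k)) := by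
    refine (hdouble.div_const (2 ^ (2 * k))).congr_fun fun m => ?_
    push_cast
    rw [mul_pow, show 2 * π * (2 * m) * x = 2 * π * m * (2 * x) by ring]
    ring
  convert! hasSum_odd_of_hasSum_even hall heven using 1
  simp only [bernoulliFun]
  ring

lemma hasSum_one_div_odd_pow_four :
    HasSum (fun m : ℕ => 1 / ((2 * m + 1 : ℕ) : ℝ) ^ 4) (π ^ 4 / 96) := by
  convert! hasSum_one_div_odd_pow_mul_cos two_ne_zero (x := 0) (by simp) using 1
  · simp
  · rw [mul_zero, bernoulliFun_eval_zero, bernoulli_eq_bernoulli'_of_ne_one (by norm_num),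
      show 2 * 2 = 4 from rfl, bernoulli'_four]
    norm_num [Nat.factorial]
    ring

lemma hasSum_neg_one_pow_div_odd_pow_three :
    HasSum (fun m : ℕ => (-1) ^ m / ((2 * m + 1 : ℕ) : ℝ) ^ 3) (π ^ 3 / 32) := by
  have heven : HasSum
      (fun m : ℕ => 1 / ((2 * m : ℕ) : ℝ) ^ 3 * sin (π * (2 * m : ℕ) / 2)) 0 := by
    refine hasSum_zero.congr_fun fun m => ?_
    rw [show π * ((2 * m : ℕ) : ℝ) / 2 = m * π by push_cast; ring, sin_nat_mul_pi, mul_zero]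
  convert! hasSum_odd_of_hasSum_even hasSum_L_function_mod_four_eval_three heven using 1
  · ext m
    rw [show π * ((2 * m + 1 : ℕ) : ℝ) / 2 = π / 2 + m * π by push_cast; ring,
      sin_add_nat_mul_pi, sin_pi_div_two]
    ring
  · rw [sub_zero]

lemma summable_abs_one_div_four_mul_add_one_pow {n : ℕ} (hn : 2 ≤ n) :
    Summable fun k : ℤ => |(1 : ℝ) / ((4 * k + 1 : ℤ) : ℝ) ^ n| :=
  ((summable_one_div_int_pow.mpr hn).comp_injective (i := fun k : ℤ => 4 * k + 1)
    fun k k' h => by simpa using h).abs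

end OddSums

section Eigenfunctions

/-- The frequency `(4k + 1) π / 2` of the eigenfunction `x ↦ cos (eigenfreq k * x)` of the operator
`f ↦ (x ↦ ∫₀^{1-x} f)`; the eigenvalue is `1 / eigenfreq k`. -/
noncomputable def eigenfreq (k : ℤ) : ℝ := ((4 * k + 1 : ℤ) : ℝ) * (π / 2)

lemma eigenfreq_eq (k : ℤ) : eigenfreq k = π / 2 + k * (2 * π) := by
  push_cast [eigenfreq]
  ring

lemma eigenfreq_ne_zero (k : ℤ) : eigenfreq k ≠ 0 :=
  mul_ne_zero (Int.cast_ne_zero.mpr (by lia)) (by positivity)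

@[simp]
lemma sin_eigenfreq (k : ℤ) : sin (eigenfreq k) = 1 := by
  rw [eigenfreq_eq, sin_add_int_mul_two_pi, sin_pi_div_two]

@[simp]
lemma cos_eigenfreq (k : ℤ) : cos (eigenfreq k) = 0 := by
  rw [eigenfreq_eq, cos_add_int_mul_two_pi, cos_pi_div_two]

lemma one_div_eigenfreq_pow (n : ℕ) (k : ℤ) :
    1 / eigenfreq k ^ n = (2 / π) ^ n * (1 / ((4 * k + 1 : ℤ) : ℝ) ^ n) := by
  rw [eigenfreq, mul_pow, div_pow, div_pow]
  field_simp

lemma summable_abs_one_div_eigenfreq_pow {n : ℕ} (hn : 2 ≤ n) :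
    Summable fun k => |1 / eigenfreq k ^ n| := by
  simp only [one_div_eigenfreq_pow, abs_mul]
  exact (summable_abs_one_div_four_mul_add_one_pow hn).mul_left _

lemma integral_cos_eigenfreq_mul (k : ℤ) (x : ℝ) :
    ∫ z in (0 : ℝ)..(1 - x), cos (eigenfreq k * z) = cos (eigenfreq k * x) / eigenfreq k := by
  rw [intervalIntegral.integral_comp_mul_left _ (eigenfreq_ne_zero k), integral_cos, mul_sub,
    mul_one, sin_sub]
  simp [div_eq_inv_mul]

lemma integral_cos_eigenfreq_mul_sq (k : ℤ) :
    ∫ z in (0 : ℝ)..1, cos (eigenfreq k * z) ^ 2 = 1 / 2 := by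
  have hk := eigenfreq_ne_zero k
  rw [intervalIntegral.integral_comp_mul_left (fun z => cos z ^ 2) hk, integral_cos_sq]
  simp only [mul_zero, mul_one, cos_eigenfreq, sin_zero, zero_mul, sub_zero, zero_add, smul_eq_mul]
  field_simp

lemma hasSum_one_div_eigenfreq_sq_mul_cos {t : ℝ} (ht : |t| ≤ 2) :
    HasSum (fun k => 1 / eigenfreq k ^ 2 * cos (eigenfreq k * t)) ((1 - |t|) / 2) := by
  have hodd := (hasSum_one_div_odd_pow_mul_cos one_ne_zero (x := |t| / 4)
    ⟨by positivity, by linarith⟩).mul_left ((2 / π) ^ 2)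
  have heven : Function.Even fun m : ℤ =>
      (2 / π) ^ 2 * (1 / (m : ℝ) ^ 2 * cos (m * (π / 2) * t)) := fun m => by simp
  convert! (hasSum_int_four_mul_add_one_iff heven).mpr ?_ using 1
  · ext k
    rw [one_div_eigenfreq_pow, eigenfreq, mul_assoc]
  · convert! hodd using 1
    · ext m
      push_cast
      rw [← cos_abs, abs_mul, abs_of_nonneg (by positivity : 0 ≤ (2 * (m : ℝ) + 1) * (π / 2))]
      ring_nf
    · simp only [mul_one, bernoulliFun_two, one_add_one_eq_two, Nat.factorial_two, Nat.cast_ofNat]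
      field_simp
      ring

end Eigenfunctions

section IteratedKernel

/-- The contribution of the `k`-th eigenfunction to `iterKernel n x y`; the factor `2` normalizes
`cos (eigenfreq k * ·)` in `L²[0, 1]`. -/
noncomputable def eigenTerm (n : ℕ) (k : ℤ) (x y : ℝ) : ℝ :=
  2 * (1 / eigenfreq k ^ n) * (cos (eigenfreq k * x) * cos (eigenfreq k * y))

/-- The spectral expansion of the kernel of the `n`-th power of the operator
`f ↦ (x ↦ ∫₀^{1-x} f)`. It converges absolutely for `2 ≤ n`. -/
noncomputable def iterKernel (n : ℕ) (x y : ℝ) : ℝ := ∑' k, eigenTerm n k x y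

lemma norm_eigenTerm_le (n : ℕ) (k : ℤ) (x y : ℝ) :
    ‖eigenTerm n k x y‖ ≤ 2 * |1 / eigenfreq k ^ n| := by
  rw [eigenTerm, norm_eq_abs, abs_mul, abs_mul, abs_two, abs_mul]
  exact mul_le_of_le_one_right (by positivity)
    (mul_le_one₀ (abs_cos_le_one _) (abs_nonneg _) (abs_cos_le_one _))

lemma continuous_eigenTerm (n : ℕ) (k : ℤ) : Continuous fun p : ℝ × ℝ => eigenTerm n k p.1 p.2 := by
  unfold eigenTerm
  fun_prop

variable {n : ℕ}

lemma continuous_iterKernel (hn : 2 ≤ n) :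
    Continuous fun p : ℝ × ℝ => iterKernel n p.1 p.2 :=
  continuous_tsum (continuous_eigenTerm n) ((summable_abs_one_div_eigenfreq_pow hn).mul_left 2)
    fun k p => norm_eigenTerm_le n k p.1 p.2

lemma hasSum_integral_eigenTerm (hn : 2 ≤ n) {f g : ℝ → ℝ} (hf : Continuous f) (hg : Continuous g)
    (a b : ℝ) :
    HasSum (fun k => ∫ z in a..b, eigenTerm n k (f z) (g z))
      (∫ z in a..b, iterKernel n (f z) (g z)) := by
  have hbound := (summable_abs_one_div_eigenfreq_pow hn).mul_left 2
  exact intervalIntegral.hasSum_integral_of_dominated_convergence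
    (fun k _ => 2 * |1 / eigenfreq k ^ n|)
    (fun k => ((continuous_eigenTerm n k).comp (hf.prodMk hg)).aestronglyMeasurable)
    (fun k => .of_forall fun z _ => norm_eigenTerm_le n k _ _)
    (.of_forall fun _ _ => hbound) intervalIntegrable_const
    (.of_forall fun z _ => (hbound.of_norm_bounded fun k => norm_eigenTerm_le n k _ _).hasSum)

lemma integral_iterKernel (hn : 2 ≤ n) (x y : ℝ) :
    ∫ z in (0 : ℝ)..(1 - x), iterKernel n z y = iterKernel (n + 1) x y := by
  rw [← (hasSum_integral_eigenTerm hn (f := fun z => z) (g := fun _ => y) continuous_id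
    continuous_const 0 (1 - x)).tsum_eq, iterKernel]
  refine tsum_congr fun k => ?_
  simp only [eigenTerm, intervalIntegral.integral_const_mul,
    intervalIntegral.integral_mul_const, integral_cos_eigenfreq_mul]
  ring

lemma integral_iterKernel_diag (hn : 2 ≤ n) :
    ∫ z in (0 : ℝ)..1, iterKernel n z z = ∑' k, 1 / eigenfreq k ^ n := by
  rw [← (hasSum_integral_eigenTerm hn (f := fun z => z) (g := fun z => z) continuous_id
    continuous_id 0 1).tsum_eq]
  refine tsum_congr fun k => ?_
  simp only [eigenTerm, ← sq, intervalIntegral.integral_const_mul,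
    integral_cos_eigenfreq_mul_sq]
  ring

lemma iterKernel_two {x y : ℝ} (hx : x ∈ Set.Icc 0 1) (hy : y ∈ Set.Icc 0 1) :
    iterKernel 2 x y = 1 - max x y := by
  obtain ⟨hx0, hx1⟩ := hx
  obtain ⟨hy0, hy1⟩ := hy
  have hdiff := hasSum_one_div_eigenfreq_sq_mul_cos (t := x - y) (abs_le.mpr (by grind))
  have hsum := hasSum_one_div_eigenfreq_sq_mul_cos (t := x + y) (abs_le.mpr (by grind))
  calc iterKernel 2 x y
    _ = ∑' k, (1 / eigenfreq k ^ 2 * cos (eigenfreq k * (x - y)) +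
          1 / eigenfreq k ^ 2 * cos (eigenfreq k * (x + y))) := by
      refine tsum_congr fun k => ?_
      rw [eigenTerm, mul_sub, mul_add, cos_sub, cos_add]
      ring
    _ = (1 - |x - y|) / 2 + (1 - |x + y|) / 2 := (hdiff.add hsum).tsum_eq
    _ = 1 - max x y := by
      rw [abs_of_nonneg (add_nonneg hx0 hy0)]
      linarith [max_add_min x y, max_sub_min_eq_abs' x y]

lemma iterKernel_nonneg (hn : 2 ≤ n) {x y : ℝ} (hx : x ∈ Set.Icc 0 1) (hy : y ∈ Set.Icc 0 1) :
    0 ≤ iterKernel n x y := by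
  induction n, hn using Nat.le_induction generalizing x with
  | base =>
    rw [iterKernel_two hx hy, sub_nonneg]
    exact max_le hx.2 hy.2
  | succ n hn ih =>
    rw [← integral_iterKernel hn]
    exact intervalIntegral.integral_nonneg (sub_nonneg.mpr hx.2) fun z hz =>
      ih ⟨hz.1, by linarith [hz.2, hx.1]⟩

end IteratedKernel

section Trace

lemma setLIntegral_Icc_ofReal {f : ℝ → ℝ} (hf : Continuous f) {a b : ℝ} (hab : a ≤ b)
    (h0 : ∀ z ∈ Set.Icc a b, 0 ≤ f z) :
    ∫⁻ z in Set.Icc a b, ENNReal.ofReal (f z) = ENNReal.ofReal (∫ z in a..b, f z) := by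
  rw [intervalIntegral.integral_of_le hab, ← integral_Icc_eq_integral_Ioc,
    ofReal_integral_eq_lintegral_ofReal hf.integrableOn_Icc]
  exact ae_restrict_of_forall_mem measurableSet_Icc h0

lemma volume_isChainBetween_inTriangle (n : ℕ) {a b : ℝ} (ha : a ∈ Set.Icc 0 1)
    (hb : b ∈ Set.Icc 0 1) :
    volume {x : Fin (n + 1) → ℝ | IsChainBetween InTriangle a b x} =
      ENNReal.ofReal (iterKernel (n + 2) a b) := by
  simp only [volume_pi]
  induction n generalizing a with
  | zero =>
    have hab : {z | InTriangle a z ∧ InTriangle z b} = Set.Icc 0 (1 - max a b) := by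
      ext z
      simp only [InTriangle, Set.mem_ofPred_eq, Set.mem_Icc]
      grind
    rw [measure_pi_isChainBetween_one, hab, volume_Icc,
      sub_zero, iterKernel_two ha hb]
  | succ n ih =>
    have hsub {z : ℝ} (hz : z ∈ Set.Icc 0 (1 - a)) : z ∈ Set.Icc 0 1 :=
      ⟨hz.1, by linarith [hz.2, ha.1]⟩
    have hcont : Continuous fun z => iterKernel (n + 2) z b :=
      (continuous_iterKernel (by lia)).comp₂ continuous_id continuous_const
    rw [measure_pi_isChainBetween_succ _ measurableSet_inTriangle,
      setOf_inTriangle ha.1,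
      setLIntegral_congr_fun measurableSet_Icc fun z hz => ih (hsub hz),
      setLIntegral_Icc_ofReal hcont (sub_nonneg.mpr ha.2)
        fun z hz => iterKernel_nonneg (by lia) (hsub hz) hb,
      integral_iterKernel (by lia)]

lemma gvol_cycG {n : ℕ} (hn : 2 ≤ n) : gvol (cycG n) = ∑' k, 1 / eigenfreq k ^ n := by
  have hnonneg (z : ℝ) (hz : z ∈ Set.Icc 0 1) : 0 ≤ iterKernel n z z := iterKernel_nonneg hn hz hz
  have hcont : Continuous fun z => iterKernel n z z :=
    (continuous_iterKernel hn).comp₂ continuous_id continuous_id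
  obtain ⟨m, rfl⟩ := Nat.exists_eq_add_of_le' hn
  have hdiag (z : ℝ) : volume {t : Fin (m + 1) → ℝ | IsChainBetween InTriangle z z t} =
      (Set.Icc 0 1).indicator (fun z => ENNReal.ofReal (iterKernel (m + 2) z z)) z := by
    by_cases hz : z ∈ Set.Icc 0 1
    · rw [Set.indicator_of_mem hz, volume_isChainBetween_inTriangle m hz hz]
    · have hempty : {t : Fin (m + 1) → ℝ | IsChainBetween InTriangle z z t} = ∅ :=
        Set.eq_empty_of_forall_notMem fun t ht => hz ht.left_mem_Icc
      rw [Set.indicator_of_notMem hz, hempty, measure_empty]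
  rw [gvol_cycG_eq_lintegral, lintegral_congr hdiag, lintegral_indicator measurableSet_Icc,
    setLIntegral_Icc_ofReal hcont zero_le_one hnonneg,
    ENNReal.toReal_ofReal (intervalIntegral.integral_nonneg zero_le_one hnonneg),
    integral_iterKernel_diag hn]

lemma tsum_one_div_four_mul_add_one_pow {n : ℕ} (hn : 2 ≤ n) :
    ∑' k : ℤ, (1 : ℝ) / ((4 * k + 1 : ℤ) : ℝ) ^ n = π ^ n * gvol (cycG n) / 2 ^ n := by
  simp_rw [gvol_cycG hn, one_div_eigenfreq_pow, tsum_mul_left, div_pow]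
  field_simp

end Trace

/-- For `n ≥ 3`, `Σ_{k ∈ ℤ} 1/(4k+1)ⁿ = πⁿ·vol(C_n)/2ⁿ` (absolutely convergent);
in particular `1 - 1/3³ + 1/5³ - 1/7³ + ⋯ = π³/32` and
`1 + 1/3⁴ + 1/5⁴ + 1/7⁴ + ⋯ = π⁴/96`. -/
theorem sum_inv_fourKPlusOne_pow :
    (∀ n : ℕ, 3 ≤ n →
      Summable (fun k : ℤ => |(1 : ℝ) / ((4 * k + 1 : ℤ) : ℝ) ^ n|) ∧
      ∑' k : ℤ, (1 : ℝ) / ((4 * k + 1 : ℤ) : ℝ) ^ n =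
        π ^ n * gvol (cycG n) / 2 ^ n) ∧
    (∑' m : ℕ, (-1 : ℝ) ^ m / ((2 * m + 1 : ℕ) : ℝ) ^ 3 = π ^ 3 / 32) ∧
    (∑' m : ℕ, (1 : ℝ) / ((2 * m + 1 : ℕ) : ℝ) ^ 4 = π ^ 4 / 96) := by
  refine ⟨fun n hn => ?_, hasSum_neg_one_pow_div_odd_pow_three.tsum_eq,
    hasSum_one_div_odd_pow_four.tsum_eq⟩
  have hn2 : 2 ≤ n := by lia
  exact ⟨summable_abs_one_div_four_mul_add_one_pow hn2, tsum_one_div_four_mul_add_one_pow hn2⟩
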